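/- In a finite collection of convex quadrilaterals in the plane with pairwise disjoint interiors, glued edge-to-edge, there exists a quadrilateral with at least one exposed edge (an edge not shared with any other quadrilateral); consequently such complexes are 4-colorable by induction. -/

import Mathlib

/-!
Write `orient p q r` for the signed area of the triangle `p q r` (up to a factor two). Two facts drive
the argument.

* No three vertices of a convex quadrilateral are collinear, and the sign pattern of its four
  orientations shows that its two diagonals each separate the remaining two vertices
  (`IsConvexQuad.exists_diagonals`).
* If two quadrilaterals have the vertices `p ≠ q` in common and each has a vertex strictly on the
  same side of the line `pq`, then their interiors meet just above the midpoint of `pq`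
  (`not_disjoint_of_same_side`).

For the exposed edge, let `p` be a vertex farthest from the origin. All other vertices lie in an
open half plane bounded by a line through `p`, so among the vertices of quadrilaterals at `p` there
is one, `q`, of extreme angle. All quadrilaterals at `p` lie on one side of `pq`; hence `pq` is an
edge, and by the second fact only one quadrilateral contains it.

For the coloring, induct on the number of quadrilaterals, removing a `V` with an exposed edge. The
second fact shows that the neighbors of `V` meet it in different pairs of vertices, none of which is
a diagonal or the exposed edge. So there are at most `6 - 2 - 1 = 3` neighbors, and a fourth
color is free for `V`.
-/


open scoped Classical

/-- A convex quadrilateral in the plane: 4 points in convex position. -/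
def IsConvexQuad (V : Finset (EuclideanSpace ℝ (Fin 2))) : Prop :=
  V.card = 4 ∧ ∀ p ∈ V,
    p ∉ convexHull ℝ ((V.erase p : Finset (EuclideanSpace ℝ (Fin 2))) :
      Set (EuclideanSpace ℝ (Fin 2)))

/-- An edge of a convex quadrilateral: two of its vertices whose segment lies on the
boundary of the quadrilateral. -/
def IsEdgeOf (F V : Finset (EuclideanSpace ℝ (Fin 2))) : Prop :=
  F ⊆ V ∧ F.card = 2 ∧
    convexHull ℝ (F : Set (EuclideanSpace ℝ (Fin 2))) ⊆
      frontier (convexHull ℝ (V : Set (EuclideanSpace ℝ (Fin 2))))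

/-! ### Orientation and overlapping interiors -/

/-- Twice the signed area of the triangle `p q r`, positive when it is counterclockwise. -/
def orient (p q r : EuclideanSpace ℝ (Fin 2)) : ℝ :=
  (q 0 - p 0) * (r 1 - p 1) - (q 1 - p 1) * (r 0 - p 0)

/-- The line through two points of `F` does not strictly separate points of `V`. -/
def OneSided (F V : Finset (EuclideanSpace ℝ (Fin 2))) : Prop :=
  ∀ a b, F = {a, b} → ∀ c ∈ V, ∀ d ∈ V, 0 ≤ orient a b c * orient a b d

lemma continuous_orient {X : Type*} [TopologicalSpace X] {f g h : X → EuclideanSpace ℝ (Fin 2)}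
    (hf : Continuous f) (hg : Continuous g) (hh : Continuous h) :
    Continuous fun x => orient (f x) (g x) (h x) := by
  unfold orient
  fun_prop

/-- A point with nonnegative homogeneous barycentric coordinates lies in the triangle. -/
lemma mem_convexHull_of_weights {s : Set (EuclideanSpace ℝ (Fin 2))}
    {x a b c : EuclideanSpace ℝ (Fin 2)} (ha : a ∈ s) (hb : b ∈ s) (hc : c ∈ s) {α β γ : ℝ}
    (hα : 0 ≤ α) (hβ : 0 ≤ β) (hγ : 0 ≤ γ) (hpos : 0 < α + β + γ)
    (hx : ∀ i, (α + β + γ) * x i = α * a i + β * b i + γ * c i) :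
    x ∈ convexHull ℝ s := by
  have key := (convex_convexHull ℝ s).sum_mem (t := Finset.univ)
    (w := ![α / (α + β + γ), β / (α + β + γ), γ / (α + β + γ)]) (z := ![a, b, c])
    (by intro i _; fin_cases i <;> simp <;> positivity)
    (by simp [Fin.sum_univ_three]; field_simp)
    (by
      intro i _
      fin_cases i
      · exact subset_convexHull ℝ s ha
      · exact subset_convexHull ℝ s hb
      · exact subset_convexHull ℝ s hc)
  convert key using 1
  ext i
  simp only [Fin.sum_univ_three, Matrix.cons_val, PiLp.add_apply, PiLp.smul_apply, smul_eq_mul]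
  field_simp
  linarith [hx i]

/-- Points whose barycentric coordinates with respect to a nondegenerate triangle are all positive
are interior to it. Each coordinate is multiplied by `orient p q v`, to cover both orientations. -/
lemma mem_interior_of_orient {s : Set (EuclideanSpace ℝ (Fin 2))}
    {p q v x : EuclideanSpace ℝ (Fin 2)} (hp : p ∈ s) (hq : q ∈ s) (hv : v ∈ s)
    (h1 : 0 < orient x q v * orient p q v) (h2 : 0 < orient p x v * orient p q v)
    (h3 : 0 < orient p q x * orient p q v) : x ∈ interior (convexHull ℝ s) := by
  rw [mem_interior]
  refine ⟨{y | 0 < orient y q v * orient p q v} ∩ {y | 0 < orient p y v * orient p q v} ∩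
    {y | 0 < orient p q y * orient p q v}, ?_, ?_, ⟨⟨h1, h2⟩, h3⟩⟩
  · rintro y ⟨⟨k1, k2⟩, k3⟩
    refine mem_convexHull_of_weights hp hq hv k1.le k2.le k3.le
      (add_pos (add_pos k1 k2) k3) fun i => ?_
    fin_cases i <;> simp [orient] <;> ring
  · refine ((isOpen_lt continuous_const ?_).inter (isOpen_lt continuous_const ?_)).inter
      (isOpen_lt continuous_const ?_)
    · exact (continuous_orient continuous_id continuous_const continuous_const).mul
        continuous_const
    · exact (continuous_orient continuous_const continuous_id continuous_const).mul
        continuous_const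
    · exact (continuous_orient continuous_const continuous_const continuous_id).mul
        continuous_const

lemma not_disjoint_of_same_side {s t : Set (EuclideanSpace ℝ (Fin 2))}
    {p q v w : EuclideanSpace ℝ (Fin 2)} (hps : p ∈ s) (hqs : q ∈ s) (hvs : v ∈ s)
    (hpt : p ∈ t) (hqt : q ∈ t) (hwt : w ∈ t) (h : 0 < orient p q v * orient p q w) :
    ¬ Disjoint (interior (convexHull ℝ s)) (interior (convexHull ℝ t)) := by
  have hv0 : orient p q v ≠ 0 := by rintro h0; simp [h0] at h
  have hw0 : orient p q w ≠ 0 := by rintro h0; simp [h0] at h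
  have hvv : 0 < orient p q v * orient p q v := mul_self_pos.2 hv0
  have hww : 0 < orient p q w * orient p q w := mul_self_pos.2 hw0
  -- The common point is `midpoint p q` moved slightly, by a parameter `ε`, towards `v`.
  obtain ⟨ε, ⟨hε1, hε2, hε3⟩, hε0⟩ : ∃ ε : ℝ, (ε < 1 ∧
      0 < ((1 - ε) / 2 * orient p q w + ε * orient v q w) * orient p q w ∧
      0 < ((1 - ε) / 2 * orient p q w + ε * orient p v w) * orient p q w) ∧ 0 < ε := by
    have e1 : ∀ᶠ ε : ℝ in nhds 0, ε < 1 := eventually_lt_nhds one_pos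
    have e2 : ∀ d : ℝ, ∀ᶠ ε : ℝ in nhds 0,
        0 < ((1 - ε) / 2 * orient p q w + ε * d) * orient p q w := by
      intro d
      refine ContinuousAt.eventually_lt (f := fun _ => (0 : ℝ)) continuousAt_const
        (by fun_prop) ?_
      simp only [sub_zero, zero_mul, add_zero]
      linarith
    have e := (e1.and ((e2 (orient v q w)).and (e2 (orient p v w)))).filter_mono
      (nhdsWithin_le_nhds (s := Set.Ioi 0))
    exact (e.and self_mem_nhdsWithin).exists
  rw [Set.not_disjoint_iff]
  refine ⟨((1 - ε) / 2) • p + ((1 - ε) / 2) • q + ε • v,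
    mem_interior_of_orient hps hqs hvs ?_ ?_ ?_, mem_interior_of_orient hpt hqt hwt ?_ ?_ ?_⟩
  · have : orient (((1 - ε) / 2) • p + ((1 - ε) / 2) • q + ε • v) q v
        = (1 - ε) / 2 * orient p q v := by simp [orient]; ring
    rw [this, mul_assoc]
    exact mul_pos (by linarith) hvv
  · have : orient p (((1 - ε) / 2) • p + ((1 - ε) / 2) • q + ε • v) v
        = (1 - ε) / 2 * orient p q v := by simp [orient]; ring
    rw [this, mul_assoc]
    exact mul_pos (by linarith) hvv
  · have : orient p q (((1 - ε) / 2) • p + ((1 - ε) / 2) • q + ε • v)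
        = ε * orient p q v := by simp [orient]; ring
    rw [this, mul_assoc]
    exact mul_pos hε0 hvv
  · convert hε2 using 2
    simp [orient]; ring
  · convert hε3 using 2
    simp [orient]; ring
  · have : orient p q (((1 - ε) / 2) • p + ((1 - ε) / 2) • q + ε • v)
        = ε * orient p q v := by simp [orient]; ring
    rw [this, mul_assoc]
    exact mul_pos hε0 h

/-! ### Diagonals of a convex quadrilateral -/

/-- In a convex quadrilateral no vertex is a convex combination of three others; the three
need not be distinct, so betweenness on a line is covered too. -/
lemma IsConvexQuad.not_weights {V : Finset (EuclideanSpace ℝ (Fin 2))} (hV : IsConvexQuad V)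
    {x a b c : EuclideanSpace ℝ (Fin 2)} (hx : x ∈ V) (ha : a ∈ V) (hb : b ∈ V) (hc : c ∈ V)
    (hax : a ≠ x) (hbx : b ≠ x) (hcx : c ≠ x) {α β γ : ℝ}
    (hα : 0 ≤ α) (hβ : 0 ≤ β) (hγ : 0 ≤ γ) (hpos : 0 < α + β + γ) :
    ¬ ∀ i, (α + β + γ) * x i = α * a i + β * b i + γ * c i := fun h =>
  hV.2 x hx <| mem_convexHull_of_weights (by simp [ha, hax]) (by simp [hb, hbx])
    (by simp [hc, hcx]) hα hβ hγ hpos h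

lemma IsConvexQuad.orient_ne_zero {V : Finset (EuclideanSpace ℝ (Fin 2))} (hV : IsConvexQuad V)
    {a b c : EuclideanSpace ℝ (Fin 2)} (ha : a ∈ V) (hb : b ∈ V) (hc : c ∈ V)
    (hab : a ≠ b) (hac : a ≠ c) (hbc : b ≠ c) : orient a b c ≠ 0 := by
  intro h
  have hn : 0 < (b 0 - a 0) ^ 2 + (b 1 - a 1) ^ 2 := by
    by_contra! hle
    apply hab
    ext i
    fin_cases i <;> simp <;> nlinarith [sq_nonneg (b 0 - a 0), sq_nonneg (b 1 - a 1)]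
  -- `n • c = (n - t) • a + t • b`, where `t` is the inner product of `c - a` and `b - a`.
  obtain ⟨n, hn', hn⟩ : ∃ n, n = (b 0 - a 0) ^ 2 + (b 1 - a 1) ^ 2 ∧ 0 < n := ⟨_, rfl, hn⟩
  obtain ⟨t, ht⟩ : ∃ t, t = (c 0 - a 0) * (b 0 - a 0) + (c 1 - a 1) * (b 1 - a 1) := ⟨_, rfl⟩
  have h0 : n * c 0 = (n - t) * a 0 + t * b 0 := by
    subst hn' ht; unfold orient at h; linear_combination -(b 1 - a 1) * h
  have h1 : n * c 1 = (n - t) * a 1 + t * b 1 := by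
    subst hn' ht; unfold orient at h; linear_combination (b 0 - a 0) * h
  rcases le_or_gt t 0 with ht0 | ht0
  · refine hV.not_weights ha hb hc hc hab.symm hac.symm hac.symm (α := -t) (β := n) (γ := 0)
      (by linarith) hn.le le_rfl (by linarith) fun i => ?_
    fin_cases i <;> simp <;> linarith
  rcases le_or_gt t n with htn | htn
  · refine hV.not_weights hc ha hb hb hac hbc hbc (α := n - t) (β := t) (γ := 0)
      (by linarith) ht0.le le_rfl (by linarith) fun i => ?_
    fin_cases i <;> simp <;> linarith
  · refine hV.not_weights hb ha hc hc hab hbc.symm hbc.symm (α := t - n) (β := n) (γ := 0)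
      (by linarith) hn.le le_rfl (by linarith) fun i => ?_
    fin_cases i <;> simp <;> linarith

/-- In an affine relation between the vertices, the sign of one coefficient cannot differ from the
common sign of the other three, since this would put its vertex in the hull of the others. -/
lemma IsConvexQuad.not_same_sign {V : Finset (EuclideanSpace ℝ (Fin 2))} (hV : IsConvexQuad V)
    {x a b c : EuclideanSpace ℝ (Fin 2)} (hx : x ∈ V) (ha : a ∈ V) (hb : b ∈ V) (hc : c ∈ V)
    (hax : a ≠ x) (hbx : b ≠ x) (hcx : c ≠ x) {X A B C : ℝ} (hsum : X + A + B + C = 0)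
    (h : ∀ i, X * x i + A * a i + B * b i + C * c i = 0) :
    ¬ (0 < A ∧ 0 < B ∧ 0 < C) ∧ ¬ (A < 0 ∧ B < 0 ∧ C < 0) := by
  constructor
  · rintro ⟨k1, k2, k3⟩
    refine hV.not_weights hx ha hb hc hax hbx hcx k1.le k2.le k3.le (by linarith) fun i => ?_
    have e : A + B + C = -X := by linarith
    rw [e]
    linarith [h i]
  · rintro ⟨k1, k2, k3⟩
    refine hV.not_weights hx ha hb hc hax hbx hcx (α := -A) (β := -B) (γ := -C)
      (by linarith) (by linarith) (by linarith) (by linarith) fun i => ?_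
    have e : -A + -B + -C = X := by linarith
    rw [e]
    linarith [h i]

lemma exists_sign_pairing {A B C D : ℝ} (hA : A ≠ 0) (hB : B ≠ 0) (hC : C ≠ 0) (hD : D ≠ 0)
    (na : ¬ (0 < B ∧ 0 < C ∧ 0 < D) ∧ ¬ (B < 0 ∧ C < 0 ∧ D < 0))
    (nb : ¬ (0 < A ∧ 0 < C ∧ 0 < D) ∧ ¬ (A < 0 ∧ C < 0 ∧ D < 0))
    (nc : ¬ (0 < A ∧ 0 < B ∧ 0 < D) ∧ ¬ (A < 0 ∧ B < 0 ∧ D < 0))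
    (nd : ¬ (0 < A ∧ 0 < B ∧ 0 < C) ∧ ¬ (A < 0 ∧ B < 0 ∧ C < 0)) :
    (0 < A * B ∧ 0 < C * D) ∨ (0 < A * C ∧ 0 < B * D) ∨ (0 < A * D ∧ 0 < B * C) := by
  simp only [mul_pos_iff]
  rcases hA.lt_or_gt with sA | sA <;> rcases hB.lt_or_gt with sB | sB <;>
    rcases hC.lt_or_gt with sC | sC <;> rcases hD.lt_or_gt with sD | sD <;> grind

/-- Radon's theorem for a convex quadrilateral: the affine relation between the vertices has two
coefficients of each sign, and this splits the vertices into the two diagonals. -/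
lemma IsConvexQuad.exists_diagonals {V : Finset (EuclideanSpace ℝ (Fin 2))}
    (hV : IsConvexQuad V) : ∃ a b c d, V = {a, b, c, d} ∧ a ≠ b ∧ a ≠ c ∧ a ≠ d ∧ b ≠ c ∧ b ≠ d ∧
      c ≠ d ∧ orient a b c * orient a b d < 0 ∧ orient c d a * orient c d b < 0 := by
  obtain ⟨a, b, c, d, hab, hac, had, hbc, hbd, hcd, rfl⟩ := Finset.card_eq_four.1 hV.1
  have ma : a ∈ ({a, b, c, d} : Finset (EuclideanSpace ℝ (Fin 2))) := by simp
  have mb : b ∈ ({a, b, c, d} : Finset (EuclideanSpace ℝ (Fin 2))) := by simp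
  have mc : c ∈ ({a, b, c, d} : Finset (EuclideanSpace ℝ (Fin 2))) := by simp
  have md : d ∈ ({a, b, c, d} : Finset (EuclideanSpace ℝ (Fin 2))) := by simp
  obtain ⟨A, hA⟩ : ∃ A, A = orient b c d := ⟨_, rfl⟩
  obtain ⟨B, hB⟩ : ∃ B, B = -orient a c d := ⟨_, rfl⟩
  obtain ⟨C, hC⟩ : ∃ C, C = orient a b d := ⟨_, rfl⟩
  obtain ⟨D, hD⟩ : ∃ D, D = -orient a b c := ⟨_, rfl⟩
  have hA0 : A ≠ 0 := hA ▸ hV.orient_ne_zero mb mc md hbc hbd hcd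
  have hB0 : B ≠ 0 := hB ▸ neg_ne_zero.2 (hV.orient_ne_zero ma mc md hac had hcd)
  have hC0 : C ≠ 0 := hC ▸ hV.orient_ne_zero ma mb md hab had hbd
  have hD0 : D ≠ 0 := hD ▸ neg_ne_zero.2 (hV.orient_ne_zero ma mb mc hab hac hbc)
  have hsum : A + B + C + D = 0 := by subst hA hB hC hD; unfold orient; ring
  have hrel : ∀ i, A * a i + B * b i + C * c i + D * d i = 0 := by
    subst hA hB hC hD
    intro i
    fin_cases i <;> simp [orient] <;> ring
  have hab_cd : 0 < A * B → 0 < C * D → orient a b c * orient a b d < 0 ∧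
      orient c d a * orient c d b < 0 := by
    intro k1 k2
    have e1 : orient a b c * orient a b d = -(C * D) := by subst hC hD; ring
    have e2 : orient c d a * orient c d b = -(A * B) := by subst hA hB; unfold orient; ring
    constructor <;> linarith
  have hac_bd : 0 < A * C → 0 < B * D → orient a c b * orient a c d < 0 ∧
      orient b d a * orient b d c < 0 := by
    intro k1 k2
    have e1 : orient a c b * orient a c d = -(B * D) := by subst hB hD; unfold orient; ring
    have e2 : orient b d a * orient b d c = -(A * C) := by subst hA hC; unfold orient; ring
    constructor <;> linarith
  have had_bc : 0 < A * D → 0 < B * C → orient a d b * orient a d c < 0 ∧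
      orient b c a * orient b c d < 0 := by
    intro k1 k2
    have e1 : orient a d b * orient a d c = -(B * C) := by subst hB hC; unfold orient; ring
    have e2 : orient b c a * orient b c d = -(A * D) := by subst hA hD; unfold orient; ring
    constructor <;> linarith
  rcases exists_sign_pairing hA0 hB0 hC0 hD0
      (hV.not_same_sign ma mb mc md hab.symm hac.symm had.symm hsum hrel)
      (hV.not_same_sign mb ma mc md hab hbc.symm hbd.symm (X := B) (by linarith)
        fun i => by linarith [hrel i])
      (hV.not_same_sign mc ma mb md hac hbc hcd.symm (X := C) (by linarith)
        fun i => by linarith [hrel i])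
      (hV.not_same_sign md ma mb mc had hbd hcd (X := D) (by linarith)
        fun i => by linarith [hrel i]) with ⟨k1, k2⟩ | ⟨k1, k2⟩ | ⟨k1, k2⟩
  · exact ⟨a, b, c, d, rfl, hab, hac, had, hbc, hbd, hcd, hab_cd k1 k2⟩
  · exact ⟨a, c, b, d, by rw [Finset.insert_comm c b], hac, hab, had, hbc.symm, hcd, hbd, hac_bd k1 k2⟩
  · exact ⟨a, d, b, c, by rw [Finset.insert_comm d b, Finset.pair_comm d c], had, hab, hac,
       hbd.symm, hcd.symm, hbc, had_bc k1 k2⟩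

/-- Among the six pairs of vertices, the two diagonals are not one-sided. -/
lemma IsConvexQuad.card_oneSided_le {V : Finset (EuclideanSpace ℝ (Fin 2))}
    (hV : IsConvexQuad V) : ((V.powersetCard 2).filter (OneSided · V)).card ≤ 4 := by
  have h6 : (V.powersetCard 2).card = 6 := by rw [Finset.card_powersetCard, hV.1]; rfl
  obtain ⟨a, b, c, d, hVe, hab, hac, had, hbc, hbd, hcd, k1, k2⟩ := hV.exists_diagonals
  have hsub : (V.powersetCard 2).filter (OneSided · V) ⊆
      (V.powersetCard 2) \ {{a, b}, {c, d}} := by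
    intro F hF
    rw [Finset.mem_filter] at hF
    simp only [Finset.mem_sdiff, hF.1, true_and, Finset.mem_insert, Finset.mem_singleton]
    rintro (rfl | rfl)
    · exact absurd (hF.2 a b rfl c (by simp [hVe]) d (by simp [hVe])) (not_le.2 k1)
    · exact absurd (hF.2 c d rfl a (by simp [hVe]) b (by simp [hVe])) (not_le.2 k2)
  have hne : ({a, b} : Finset (EuclideanSpace ℝ (Fin 2))) ≠ {c, d} := by
    intro h
    have : a ∈ ({c, d} : Finset (EuclideanSpace ℝ (Fin 2))) := h ▸ (by simp)
    simp [hac, had] at this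
  have hdiag : ({{a, b}, {c, d}} : Finset (Finset (EuclideanSpace ℝ (Fin 2)))) ⊆
      V.powersetCard 2 := by
    intro F hF
    simp only [Finset.mem_insert, Finset.mem_singleton] at hF
    rw [Finset.mem_powersetCard]
    rcases hF with rfl | rfl
    · exact ⟨by intro x; simp [hVe]; tauto, Finset.card_pair hab⟩
    · exact ⟨by intro x; simp [hVe]; tauto, Finset.card_pair hcd⟩
  have := Finset.card_le_card hsub
  rw [Finset.card_sdiff_of_subset hdiag, h6, Finset.card_pair hne] at this
  exact this

lemma IsConvexQuad.exists_third {V : Finset (EuclideanSpace ℝ (Fin 2))} (hV : IsConvexQuad V)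
    {p q : EuclideanSpace ℝ (Fin 2)} (hp : p ∈ V) (hq : q ∈ V) (hpq : p ≠ q) :
    ∃ v ∈ V, orient p q v ≠ 0 := by
  obtain ⟨v, hv, hvn⟩ := Finset.exists_mem_notMem_of_card_lt_card
    (s := {p, q}) (t := V) (by rw [Finset.card_pair hpq, hV.1]; norm_num)
  simp only [Finset.mem_insert, Finset.mem_singleton, not_or] at hvn
  exact ⟨v, hv, hV.orient_ne_zero hp hq hv hpq (Ne.symm hvn.1) (Ne.symm hvn.2)⟩

/-! ### Existence of an exposed edge -/

/-- The segment between two vertices is in the frontier when all vertices are weakly on one side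
of the line through them. -/
lemma segment_subset_frontier {V : Finset (EuclideanSpace ℝ (Fin 2))}
    {p q : EuclideanSpace ℝ (Fin 2)} (hp : p ∈ V) (hq : q ∈ V) (hpq : p ≠ q)
    (hside : ∀ r ∈ V, 0 ≤ orient p q r) :
    convexHull ℝ (({p, q} : Finset (EuclideanSpace ℝ (Fin 2))) : Set (EuclideanSpace ℝ (Fin 2))) ⊆
      frontier (convexHull ℝ (V : Set (EuclideanSpace ℝ (Fin 2)))) := by
  have hconv : ∀ x y : EuclideanSpace ℝ (Fin 2), ∀ s t : ℝ, s + t = 1 →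
      orient p q (s • x + t • y) = s * orient p q x + t * orient p q y := by
    intro x y s t hst
    obtain rfl : t = 1 - s := by linarith
    simp [orient]; ring
  have hhull : ∀ x ∈ convexHull ℝ (V : Set (EuclideanSpace ℝ (Fin 2))), 0 ≤ orient p q x := by
    intro x hx
    refine convexHull_min (t := {x | 0 ≤ orient p q x}) (fun r hr => hside r hr) ?_ hx
    intro x hx y hy s t hs ht hst
    simp only [Set.mem_ofPred_eq] at *
    rw [hconv x y s t hst]
    positivity
  have hn : 0 < (q 0 - p 0) ^ 2 + (q 1 - p 1) ^ 2 := by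
    by_contra! hle
    apply hpq
    ext i
    fin_cases i <;> simp <;> nlinarith [sq_nonneg (q 0 - p 0), sq_nonneg (q 1 - p 1)]
  intro x hx
  have hx0 : orient p q x = 0 := by
    rw [Finset.coe_pair, convexHull_pair] at hx
    obtain ⟨s, t, hs, ht, hst, rfl⟩ := hx
    rw [hconv p q s t hst]
    simp [orient]
    right; ring
  refine ⟨subset_closure (convexHull_mono (by intro y; simp; rintro (rfl | rfl) <;> assumption) hx),
    fun hint => ?_⟩
  -- Moving an interior point slightly along the outward normal stays inside the hull.
  have hcont : Continuous fun t : ℝ => x + t • !₂[q 1 - p 1, -(q 0 - p 0)] := by fun_prop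
  have hev : ∀ᶠ t : ℝ in nhds 0, x + t • !₂[q 1 - p 1, -(q 0 - p 0)] ∈
      interior (convexHull ℝ (V : Set (EuclideanSpace ℝ (Fin 2)))) :=
    hcont.continuousAt.eventually (isOpen_interior.mem_nhds (by simpa using hint))
  obtain ⟨t, ht, ht0⟩ := ((hev.filter_mono (nhdsWithin_le_nhds (s := Set.Ioi 0))).and
    self_mem_nhdsWithin).exists
  have h1 := hhull _ (interior_subset ht)
  have h2 : orient p q (x + t • !₂[q 1 - p 1, -(q 0 - p 0)]) =
      orient p q x - t * ((q 0 - p 0) ^ 2 + (q 1 - p 1) ^ 2) := by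
    simp [orient]; ring
  rw [h2, hx0] at h1
  have := mul_pos (Set.mem_Ioi.1 ht0) hn
  linarith

/-- The extreme-angle argument at a vertex farthest from the origin. -/
lemma exists_exposed (S : Finset (Finset (EuclideanSpace ℝ (Fin 2)))) (hne : S.Nonempty)
    (hquad : ∀ V ∈ S, IsConvexQuad V)
    (hdisj : ∀ V ∈ S, ∀ W ∈ S, V ≠ W →
      Disjoint (interior (convexHull ℝ (V : Set (EuclideanSpace ℝ (Fin 2)))))
        (interior (convexHull ℝ (W : Set (EuclideanSpace ℝ (Fin 2)))))) :
    ∃ V ∈ S, ∃ F, IsEdgeOf F V ∧ OneSided F V ∧ ∀ W ∈ S, W ≠ V → ¬ F ⊆ W := by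
  have hP : (S.biUnion id).Nonempty := by
    obtain ⟨V, hV⟩ := hne
    obtain ⟨v, hv⟩ := Finset.card_pos.1 (by rw [(hquad V hV).1]; norm_num : 0 < V.card)
    exact ⟨v, Finset.mem_biUnion.2 ⟨V, hV, hv⟩⟩
  obtain ⟨p, hpP, hpmax⟩ := Finset.exists_max_image (S.biUnion id)
    (fun x => (x 0) ^ 2 + (x 1) ^ 2) hP
  obtain ⟨V₀, hV₀, hpV₀⟩ := Finset.mem_biUnion.1 hpP
  -- `g r` is the distance, scaled by `|p|`, from `r` to the supporting line at `p`.
  set g : EuclideanSpace ℝ (Fin 2) → ℝ := fun r => p 0 * (p 0 - r 0) + p 1 * (p 1 - r 1) with hg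
  set h : EuclideanSpace ℝ (Fin 2) → ℝ :=
    fun r => p 0 * (r 1 - p 1) - p 1 * (r 0 - p 0) with hh
  have hgpos : ∀ r ∈ S.biUnion id, r ≠ p → 0 < g r := by
    intro r hr hrp
    have h1 := hpmax r hr
    have h2 : 0 < (p 0 - r 0) ^ 2 + (p 1 - r 1) ^ 2 := by
      by_contra! hle
      apply hrp
      ext i
      fin_cases i <;> simp <;> nlinarith [sq_nonneg (p 0 - r 0), sq_nonneg (p 1 - r 1)]
    simp only [hg]
    nlinarith
  obtain ⟨q, hq, hqmin⟩ : ∃ q ∈ ((S.filter (p ∈ ·)).biUnion id).erase p,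
      ∀ r ∈ ((S.filter (p ∈ ·)).biUnion id).erase p, h q / g q ≥ h r / g r := by
    refine Finset.exists_max_image _ (fun r => h r / g r) ?_
    obtain ⟨v, hv, hvp⟩ := Finset.exists_mem_ne
      (by rw [(hquad V₀ hV₀).1]; norm_num : 1 < V₀.card) p
    exact ⟨v, Finset.mem_erase.2 ⟨hvp, Finset.mem_biUnion.2
      ⟨V₀, Finset.mem_filter.2 ⟨hV₀, hpV₀⟩, hv⟩⟩⟩
  obtain ⟨hqp, hq⟩ := Finset.mem_erase.1 hq
  obtain ⟨V, hV, hqV⟩ := Finset.mem_biUnion.1 hq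
  obtain ⟨hVS, hpV⟩ := Finset.mem_filter.1 hV
  have hgq : 0 < g q := hgpos q (Finset.mem_biUnion.2 ⟨V, hVS, hqV⟩) hqp
  have hn : 0 < (p 0) ^ 2 + (p 1) ^ 2 := by
    by_contra! hle
    have e0 : p 0 = 0 := by nlinarith [sq_nonneg (p 0), sq_nonneg (p 1)]
    have e1 : p 1 = 0 := by nlinarith [sq_nonneg (p 0), sq_nonneg (p 1)]
    simp [hg, e0, e1] at hgq
  have hside : ∀ W ∈ S, p ∈ W → ∀ r ∈ W, 0 ≤ orient p q r := by
    intro W hW hpW r hr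
    by_cases hrp : r = p
    · simp [hrp, orient]
    have hgr : 0 < g r := hgpos r (Finset.mem_biUnion.2 ⟨W, hW, hr⟩) hrp
    have hle := hqmin r (Finset.mem_erase.2 ⟨hrp, Finset.mem_biUnion.2
      ⟨W, Finset.mem_filter.2 ⟨hW, hpW⟩, hr⟩⟩)
    rw [ge_iff_le, div_le_div_iff₀ hgr hgq] at hle
    have hid : ((p 0) ^ 2 + (p 1) ^ 2) * orient p q r = h q * g r - h r * g q := by
      simp only [hg, hh, orient]; ring
    by_contra! hneg
    have := mul_neg_of_pos_of_neg hn hneg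
    linarith
  have hpq : p ≠ q := Ne.symm hqp
  refine ⟨V, hVS, {p, q}, ⟨?_, Finset.card_pair hpq,
    segment_subset_frontier hpV hqV hpq (hside V hVS hpV)⟩, ?_, ?_⟩
  · intro x; simp; rintro (rfl | rfl) <;> assumption
  · intro a b hab c hc d hd
    have hc' := hside V hVS hpV c hc
    have hd' := hside V hVS hpV d hd
    have : (a = p ∧ b = q) ∨ (a = q ∧ b = p) := by
      have ha : a ∈ ({p, q} : Finset (EuclideanSpace ℝ (Fin 2))) := hab ▸ by simp
      have hb : b ∈ ({p, q} : Finset (EuclideanSpace ℝ (Fin 2))) := hab ▸ by simp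
      have hp : p ∈ ({a, b} : Finset (EuclideanSpace ℝ (Fin 2))) := hab ▸ by simp
      have hq : q ∈ ({a, b} : Finset (EuclideanSpace ℝ (Fin 2))) := hab ▸ by simp
      simp only [Finset.mem_insert, Finset.mem_singleton] at ha hb hp hq
      grind
    rcases this with ⟨rfl, rfl⟩ | ⟨rfl, rfl⟩
    · positivity
    · have : orient a b c * orient a b d = orient b a c * orient b a d := by
        unfold orient; ring
      rw [this]
      positivity
  · intro W hW hWV hsub
    have hpW : p ∈ W := hsub (by simp)
    have hqW : q ∈ W := hsub (by simp)
    obtain ⟨v, hv, hv0⟩ := (hquad V hVS).exists_third hpV hqV hpq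
    obtain ⟨w, hw, hw0⟩ := (hquad W hW).exists_third hpW hqW hpq
    have hv1 := lt_of_le_of_ne (hside V hVS hpV v hv) hv0.symm
    have hw1 := lt_of_le_of_ne (hside W hW hpW w hw) hw0.symm
    exact not_disjoint_of_same_side (s := V) (t := W) hpV hqV hv hpW hqW hw (mul_pos hv1 hw1)
      (hdisj V hVS W hW hWV.symm)

/-! ### Neighbors and coloring -/

lemma orient_mul_nonpos {V W : Finset (EuclideanSpace ℝ (Fin 2))}
    (hd : Disjoint (interior (convexHull ℝ (V : Set (EuclideanSpace ℝ (Fin 2)))))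
        (interior (convexHull ℝ (W : Set (EuclideanSpace ℝ (Fin 2))))))
    {p q v w : EuclideanSpace ℝ (Fin 2)} (hpV : p ∈ V) (hqV : q ∈ V) (hv : v ∈ V)
    (hpW : p ∈ W) (hqW : q ∈ W) (hw : w ∈ W) : orient p q v * orient p q w ≤ 0 := by
  by_contra! h
  exact not_disjoint_of_same_side (s := V) (t := W) hpV hqV hv hpW hqW hw h hd

lemma mem_of_inter_eq_pair {V W : Finset (EuclideanSpace ℝ (Fin 2))}
    {p q : EuclideanSpace ℝ (Fin 2)} (h : V ∩ W = {p, q}) :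
    p ∈ V ∧ q ∈ V ∧ p ∈ W ∧ q ∈ W := by
  have hp : p ∈ V ∩ W := h ▸ by simp
  have hq : q ∈ V ∩ W := h ▸ by simp
  simp only [Finset.mem_inter] at hp hq
  exact ⟨hp.1, hq.1, hp.2, hq.2⟩

/-- A quadrilateral has at most four vertex pairs that are one-sided, distinct neighbors use
distinct ones, and none uses the exposed edge. -/
lemma card_neighbors_le (S : Finset (Finset (EuclideanSpace ℝ (Fin 2))))
    (hquad : ∀ V ∈ S, IsConvexQuad V)
    (hdisj : ∀ V ∈ S, ∀ W ∈ S, V ≠ W →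
      Disjoint (interior (convexHull ℝ (V : Set (EuclideanSpace ℝ (Fin 2)))))
        (interior (convexHull ℝ (W : Set (EuclideanSpace ℝ (Fin 2))))))
    {V F : Finset (EuclideanSpace ℝ (Fin 2))} (hV : V ∈ S) (hF : IsEdgeOf F V)
    (hF1 : OneSided F V) (hexp : ∀ W ∈ S, W ≠ V → ¬ F ⊆ W) :
    ((S.erase V).filter fun W => (V ∩ W).card = 2).card ≤ 3 := by
  have hmaps : ∀ W ∈ (S.erase V).filter fun W => (V ∩ W).card = 2,
      V ∩ W ∈ ((V.powersetCard 2).filter (OneSided · V)).erase F := by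
    intro W hW
    simp only [Finset.mem_filter, Finset.mem_erase] at hW
    obtain ⟨⟨hWV, hWS⟩, hcard⟩ := hW
    rw [Finset.mem_erase, Finset.mem_filter, Finset.mem_powersetCard]
    refine ⟨fun h => hexp W hWS hWV (h ▸ Finset.inter_subset_right),
      ⟨Finset.inter_subset_left, hcard⟩, ?_⟩
    intro a b hab c hc d hd
    obtain ⟨haV, hbV, haW, hbW⟩ := mem_of_inter_eq_pair hab
    have hne : a ≠ b := by rintro rfl; simp [hab] at hcard
    obtain ⟨w, hw, hw0⟩ := (hquad W hWS).exists_third haW hbW hne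
    have hdis := hdisj V hV W hWS hWV.symm
    have h1 := orient_mul_nonpos hdis haV hbV hc haW hbW hw
    have h2 := orient_mul_nonpos hdis haV hbV hd haW hbW hw
    have h3 := mul_nonneg_of_nonpos_of_nonpos h1 h2
    by_contra! hneg
    have : 0 < orient a b w ^ 2 := by positivity
    nlinarith [mul_neg_of_pos_of_neg this hneg]
  have hinj : Set.InjOn (fun W => V ∩ W)
      (((S.erase V).filter fun W => (V ∩ W).card = 2 :
        Finset (Finset (EuclideanSpace ℝ (Fin 2)))) :
        Set (Finset (EuclideanSpace ℝ (Fin 2)))) := by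
    intro W hW W' hW' heq
    simp only [Finset.coe_filter, Finset.mem_erase, Set.mem_ofPred_eq] at hW hW' heq
    obtain ⟨⟨hWV, hWS⟩, hcard⟩ := hW
    obtain ⟨⟨hWV', hWS'⟩, -⟩ := hW'
    by_contra hWW
    obtain ⟨a, b, hne, hab⟩ := Finset.card_eq_two.1 hcard
    obtain ⟨haV, hbV, haW, hbW⟩ := mem_of_inter_eq_pair hab
    obtain ⟨-, -, haW', hbW'⟩ := mem_of_inter_eq_pair (heq ▸ hab)
    obtain ⟨v, hv, hv0⟩ := (hquad V hV).exists_third haV hbV hne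
    obtain ⟨w, hw, hw0⟩ := (hquad W hWS).exists_third haW hbW hne
    obtain ⟨w', hw', hw0'⟩ := (hquad W' hWS').exists_third haW' hbW' hne
    have h1 := orient_mul_nonpos (hdisj V hV W hWS hWV.symm) haV hbV hv haW hbW hw
    have h2 := orient_mul_nonpos (hdisj V hV W' hWS' hWV'.symm) haV hbV hv haW' hbW' hw'
    have h3 := orient_mul_nonpos (hdisj W hWS W' hWS' hWW) haW hbW hw haW' hbW' hw'
    have h4 := mul_nonneg_of_nonpos_of_nonpos h1 h2
    -- Three nonzero numbers cannot have pairwise opposite signs.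
    have h5 : 0 < orient a b v ^ 2 := by positivity
    have h6 : orient a b w * orient a b w' < 0 := lt_of_le_of_ne h3 (mul_ne_zero hw0 hw0')
    nlinarith [mul_neg_of_pos_of_neg h5 h6]
  have h1 := Finset.card_le_card_of_injOn _ hmaps hinj
  have hFmem : F ∈ (V.powersetCard 2).filter (OneSided · V) :=
    Finset.mem_filter.2 ⟨Finset.mem_powersetCard.2 ⟨hF.1, hF.2.1⟩, hF1⟩
  rw [Finset.card_erase_of_mem hFmem] at h1
  have h2 := (hquad V hV).card_oneSided_le
  omega

/-- Greedy coloring, for the relation of having exactly two common vertices, which is symmetric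
and implied by sharing an edge. -/
lemma exists_coloring (S : Finset (Finset (EuclideanSpace ℝ (Fin 2))))
    (hquad : ∀ V ∈ S, IsConvexQuad V)
    (hdisj : ∀ V ∈ S, ∀ W ∈ S, V ≠ W →
      Disjoint (interior (convexHull ℝ (V : Set (EuclideanSpace ℝ (Fin 2)))))
        (interior (convexHull ℝ (W : Set (EuclideanSpace ℝ (Fin 2)))))) :
    ∃ c : Finset (EuclideanSpace ℝ (Fin 2)) → Fin 4,
      ∀ V ∈ S, ∀ W ∈ S, V ≠ W → (V ∩ W).card = 2 → c V ≠ c W := by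
  induction S using Finset.strongInduction with
  | H S ih =>
    rcases S.eq_empty_or_nonempty with rfl | hne
    · exact ⟨fun _ => 0, by simp⟩
    obtain ⟨V, hV, F, hF, hF1, hexp⟩ := exists_exposed S hne hquad hdisj
    obtain ⟨c, hc⟩ := ih (S.erase V) (Finset.erase_ssubset hV)
      (fun U hU => hquad U (Finset.mem_of_mem_erase hU))
      (fun U hU W hW => hdisj U (Finset.mem_of_mem_erase hU) W (Finset.mem_of_mem_erase hW))
    have hcard := card_neighbors_le S hquad hdisj hV hF hF1 hexp
    obtain ⟨k, -, hk⟩ := Finset.exists_mem_notMem_of_card_lt_card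
      (s := ((S.erase V).filter fun W => (V ∩ W).card = 2).image c)
      (t := (Finset.univ : Finset (Fin 4)))
      (lt_of_le_of_lt (Finset.card_image_le.trans hcard) (by simp))
    have hk' : ∀ W ∈ S, W ≠ V → (V ∩ W).card = 2 → c W ≠ k := fun W hW hWV h2 hck =>
      hk (Finset.mem_image.2
        ⟨W, Finset.mem_filter.2 ⟨Finset.mem_erase.2 ⟨hWV, hW⟩, h2⟩, hck⟩)
    refine ⟨Function.update c V k, fun U hU W hW hUW h2 => ?_⟩
    by_cases hUV : U = V
    · subst hUV
      rw [Function.update_self, Function.update_of_ne hUW.symm]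
      exact (hk' W hW hUW.symm h2).symm
    by_cases hWV : W = V
    · subst hWV
      rw [Function.update_self, Function.update_of_ne hUW]
      exact hk' U hU hUW (Finset.inter_comm U W ▸ h2)
    rw [Function.update_of_ne hUV, Function.update_of_ne hWV]
    exact hc U (Finset.mem_erase.2 ⟨hUV, hU⟩) W (Finset.mem_erase.2 ⟨hWV, hW⟩) hUW h2

/-- In a finite nonempty collection of convex quadrilaterals with pairwise disjoint
interiors glued edge-to-edge, some quadrilateral has an exposed edge, and consequently
the collection is 4-colorable. -/
theorem quad_exposed_edge_and_coloring (S : Finset (Finset (EuclideanSpace ℝ (Fin 2))))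
    (hne : S.Nonempty)
    (hquad : ∀ V ∈ S, IsConvexQuad V)
    (hdisj : ∀ V ∈ S, ∀ W ∈ S, V ≠ W →
      Disjoint (interior (convexHull ℝ (V : Set (EuclideanSpace ℝ (Fin 2)))))
        (interior (convexHull ℝ (W : Set (EuclideanSpace ℝ (Fin 2))))))
    (hglue : ∀ V ∈ S, ∀ W ∈ S, V ≠ W →
      convexHull ℝ (V : Set (EuclideanSpace ℝ (Fin 2))) ∩
          convexHull ℝ (W : Set (EuclideanSpace ℝ (Fin 2))) =
        convexHull ℝ ((V ∩ W : Finset (EuclideanSpace ℝ (Fin 2))) :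
          Set (EuclideanSpace ℝ (Fin 2)))) :
    (∃ V ∈ S, ∃ F, IsEdgeOf F V ∧ ∀ W ∈ S, W ≠ V → ¬ F ⊆ W) ∧
      ∃ c : Finset (EuclideanSpace ℝ (Fin 2)) → Fin 4,
        ∀ V ∈ S, ∀ W ∈ S, V ≠ W → IsEdgeOf (V ∩ W) V → c V ≠ c W := by
  obtain ⟨V, hV, F, hF, -, hexp⟩ := exists_exposed S hne hquad hdisj
  obtain ⟨c, hc⟩ := exists_coloring S hquad hdisj
  exact ⟨⟨V, hV, F, hF, hexp⟩, c, fun V hV W hW hVW hE => hc V hV W hW hVW hE.2.1⟩
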